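/- For all m, n ≥ 0, the poset NC(U_{m,n}) admits a symmetric chain decomposition: its underlying set can be partitioned into saturated chains C (each consecutive pair of elements of C is a covering pair in NC(U_{m,n})) such that for each chain C, ρ(min C) + ρ(max C) = (m + n) − 1, where ρ(π) = (m + n) − (number of blocks of π). -/

import Mathlib

open Finset

/-- A finpartition of a finite set of points in the plane is *noncrossing* if the
convex hulls (over `ℝ`) of its blocks are pairwise disjoint. -/
def IsNoncrossing {P : Finset ℂ} (π : Finpartition P) : Prop :=
  (π.parts : Set (Finset ℂ)).Pairwise fun B₁ B₂ =>
    Disjoint (convexHull ℝ (B₁ : Set ℂ)) (convexHull ℝ (B₂ : Set ℂ))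

/-- The poset `NC(P)` of noncrossing partitions of `P`, ordered by refinement:
`π ≤ μ` iff every block of `μ` is a union of blocks of `π`. -/
abbrev NC (P : Finset ℂ) : Type := {π : Finpartition P // IsNoncrossing π}

/-- The blocks of a noncrossing partition. -/
def NC.parts {P : Finset ℂ} (π : NC P) : Finset (Finset ℂ) := π.1.parts

/-- Two points lie in a common block of a noncrossing partition. -/
def NC.SameBlock {P : Finset ℂ} (π : NC P) (a b : ℂ) : Prop :=
  ∃ B ∈ π.parts, a ∈ B ∧ b ∈ B

/-- The open cone configuration `U_{m,n} = {1, …, m} ∪ {i, 2i, …, ni} ⊆ ℂ`. -/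
noncomputable def Uconfig (m n : ℕ) : Finset ℂ :=
  ((Finset.Icc 1 m).image fun j : ℕ => (j : ℂ)) ∪
    ((Finset.Icc 1 n).image fun k : ℕ => (k : ℂ) * Complex.I)


/-- Abstract symmetric chain decomposition of a set. -/
def HasSCD {α : Type*} (S : Set α) (R : α → α → Prop) (rk : α → ℕ) (N : ℕ) : Prop :=
  ∃ C : Set (List α), [] ∉ C ∧ (∀ l ∈ C, ∀ x ∈ l, x ∈ S) ∧
    (∀ x ∈ S, ∃! l, l ∈ C ∧ x ∈ l) ∧ (∀ l ∈ C, l.IsChain R) ∧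
    ∀ l ∈ C, ∀ h : l ≠ [], rk (l.head h) + rk (l.getLast h) = N

theorem isChain_map_aux {α β : Type*} (f : α → β) (S : Set α) (R : α → α → Prop)
    (R' : β → β → Prop) (h : ∀ x ∈ S, ∀ y ∈ S, R x y → R' (f x) (f y)) (l : List α)
    (hl : l.IsChain R) (hS : ∀ x ∈ l, x ∈ S) : (l.map f).IsChain R' := by
  induction l with
  | nil => simp
  | cons a l ih =>
    cases l with
    | nil => simp
    | cons b l =>
      simp only [List.map_cons, List.isChain_cons_cons] at hl ih ⊢
      refine ⟨h _ (hS _ (by simp)) _ (hS _ (by simp)) hl.1, ih hl.2 ?_⟩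
      intro x hx
      exact hS x (List.mem_cons_of_mem _ hx)

theorem HasSCD.map {α β : Type*} {S : Set α} {R : α → α → Prop} {rk : α → ℕ} {N : ℕ}
    (H : HasSCD S R rk N) (f : α → β) (hf : Set.InjOn f S) (R' : β → β → Prop)
    (rk' : β → ℕ) (N' : ℕ) (hR : ∀ x ∈ S, ∀ y ∈ S, R x y → R' (f x) (f y))
    (hrk : ∀ x ∈ S, ∀ y ∈ S, rk x + rk y = N → rk' (f x) + rk' (f y) = N') :
    HasSCD (f '' S) R' rk' N' := by
  obtain ⟨C, h0, hS, hu, hc, hr⟩ := H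
  refine ⟨(List.map f) '' C, ?_, ?_, ?_, ?_, ?_⟩
  · rintro ⟨l, hl, h⟩
    rw [List.map_eq_nil_iff] at h
    exact h0 (h ▸ hl)
  · rintro _ ⟨l, hl, rfl⟩ x hx
    obtain ⟨y, hy, rfl⟩ := List.mem_map.1 hx
    exact ⟨y, hS l hl y hy, rfl⟩
  · rintro _ ⟨x, hx, rfl⟩
    obtain ⟨l, ⟨hl, hxl⟩, hun⟩ := hu x hx
    refine ⟨l.map f, ⟨⟨l, hl, rfl⟩, List.mem_map_of_mem hxl⟩, ?_⟩
    rintro _ ⟨⟨l', hl', rfl⟩, h⟩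
    obtain ⟨y, hy, hyx⟩ := List.mem_map.1 h
    have := hf (hS l' hl' y hy) hx hyx
    subst this
    rw [hun l' ⟨hl', hy⟩]
  · rintro _ ⟨l, hl, rfl⟩
    exact isChain_map_aux f S R R' hR l (hc l hl) (hS l hl)
  · rintro _ ⟨l, hl, rfl⟩ h
    have hne : l ≠ [] := by rintro rfl; simp at h
    rw [List.head_map, List.getLast_map]
    exact hrk _ (hS l hl _ (List.head_mem hne)) _ (hS l hl _ (List.getLast_mem hne)) (hr l hl hne)

theorem HasSCD.union {α ι : Type*} {S : Set α} {R : α → α → Prop} {rk : α → ℕ} {N : ℕ}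
    (g : α → ι) (H : ∀ i, i ∈ g '' S → HasSCD {x | x ∈ S ∧ g x = i} R rk N) : HasSCD S R rk N := by
  choose! C h0 hS hu hc hr using H
  refine ⟨{l | ∃ i ∈ g '' S, l ∈ C i}, ?_, ?_, ?_, ?_, ?_⟩
  · rintro ⟨i, hi, h⟩
    exact h0 i hi h
  · rintro l ⟨i, hi, h⟩ x hx
    exact (hS i hi l h x hx).1
  · intro x hx
    have hi : g x ∈ g '' S := ⟨x, hx, rfl⟩
    obtain ⟨l, ⟨hl, hxl⟩, hun⟩ := hu (g x) hi x ⟨hx, rfl⟩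
    refine ⟨l, ⟨⟨g x, hi, hl⟩, hxl⟩, ?_⟩
    rintro l' ⟨⟨i, hi', hl'⟩, hxl'⟩
    have := (hS i hi' l' hl' x hxl').2
    subst this
    exact hun l' ⟨hl', hxl'⟩
  · rintro l ⟨i, hi, h⟩
    exact hc i hi l h
  · rintro l ⟨i, hi, h⟩
    exact hr i hi l h

/-- `y` is obtained from `x` by adding one new element. -/
def AddOne {β : Type*} [DecidableEq β] (x y : Finset β) : Prop := ∃ e, e ∉ x ∧ y = insert e x

theorem AddOne.ssubset {β : Type*} [DecidableEq β] {x y : Finset β} (h : AddOne x y) : x ⊂ y := by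
  obtain ⟨e, he, rfl⟩ := h
  exact Finset.ssubset_insert he

theorem chain_nodup {β : Type*} [DecidableEq β] (l : List (Finset β)) (h : l.IsChain AddOne) :
    l.Nodup := by
  have h1 : l.IsChain (· ⊂ ·) := h.imp (fun _ _ h => AddOne.ssubset h)
  have h2 := List.isChain_iff_pairwise.1 h1
  exact h2.imp (fun h => h.ne)

theorem scd_double {β : Type*} [DecidableEq β] (a : β) (l : List (Finset β)) (z : Finset β) (N : ℕ)
    (hl : (l ++ [z]).IsChain AddOne) (ha : ∀ x ∈ l ++ [z], a ∉ x)
    (hN : ((l ++ [z]).head (by simp)).card + z.card = N) :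
    HasSCD {x | x.erase a ∈ l ++ [z]} AddOne Finset.card (N + 1) := by
  have hnd := chain_nodup _ hl
  have hz : z ∉ l := by
    rw [List.nodup_append] at hnd
    intro hz
    exact hnd.2.2 z hz z (by simp) rfl
  have haz : a ∉ z := ha z (by simp)
  refine ⟨{l' | l' ≠ [] ∧ (l' = l ++ [z] ++ [insert a z] ∨ l' = l.map (insert a))}, ?_, ?_, ?_, ?_, ?_⟩
  · simp
  · rintro l' ⟨-, rfl | rfl⟩ x hx
    · rw [List.mem_append] at hx
      rcases hx with hx | hx
      · simp only [Set.mem_ofPred_eq]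
        rw [Finset.erase_eq_of_notMem (ha x hx)]
        exact hx
      · simp only [List.mem_singleton] at hx
        subst hx
        simp [Finset.erase_insert haz]
    · obtain ⟨y, hy, rfl⟩ := List.mem_map.1 hx
      have : a ∉ y := ha y (by simp [hy])
      simp [Finset.erase_insert this, hy]
  · intro x hx
    simp only [Set.mem_ofPred_eq] at hx
    by_cases hax : a ∈ x
    · by_cases hxz : x.erase a = z
      · have hx' : x = insert a z := by rw [← hxz, Finset.insert_erase hax]
        refine ⟨l ++ [z] ++ [insert a z], ⟨⟨by simp, Or.inl rfl⟩, by simp [hx']⟩, ?_⟩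
        rintro l' ⟨⟨-, rfl | rfl⟩, h⟩
        · rfl
        · exfalso
          obtain ⟨y, hy, rfl⟩ := List.mem_map.1 h
          have : a ∉ y := ha y (by simp [hy])
          rw [Finset.erase_insert this] at hxz
          exact hz (hxz ▸ hy)
      · have hxl : x.erase a ∈ l := by simpa [hxz] using hx
        have hm : x ∈ l.map (insert a) := List.mem_map.2 ⟨_, hxl, Finset.insert_erase hax⟩
        refine ⟨l.map (insert a), ⟨⟨List.ne_nil_of_mem hm, Or.inr rfl⟩, hm⟩, ?_⟩
        rintro l' ⟨⟨-, rfl | rfl⟩, h⟩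
        · exfalso
          rw [List.mem_append] at h
          rcases h with h | h
          · exact ha x h hax
          · simp only [List.mem_singleton] at h
            apply hxz
            rw [h, Finset.erase_insert haz]
        · rfl
    · rw [Finset.erase_eq_of_notMem hax] at hx
      refine ⟨l ++ [z] ++ [insert a z], ⟨⟨by simp, Or.inl rfl⟩, List.mem_append_left _ hx⟩, ?_⟩
      rintro l' ⟨⟨-, rfl | rfl⟩, h⟩
      · rfl
      · exfalso
        obtain ⟨y, hy, rfl⟩ := List.mem_map.1 h
        simp at hax
  · rintro l' ⟨-, rfl | rfl⟩
    · rw [List.isChain_append]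
      refine ⟨hl, by simp, ?_⟩
      intro x hx y hy
      simp at hx hy
      subst hx hy
      exact ⟨a, haz, rfl⟩
    · refine isChain_map_aux (insert a) {x | a ∉ x} AddOne AddOne ?_ l (List.isChain_append.1 hl).1 ?_
      · rintro x hx _ hy ⟨e, he, rfl⟩
        refine ⟨e, ?_, Finset.insert_comm _ _ _⟩
        simp only [Set.mem_ofPred_eq, Finset.mem_insert, not_or] at hy ⊢
        exact ⟨fun h => hy.1 h.symm, he⟩
      · intro x hx
        exact ha x (by simp [hx])
  · rintro l' ⟨hne, rfl | rfl⟩ h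
    · simp only [List.getLast_append_singleton]
      rw [Finset.card_insert_of_notMem haz, List.head_append_left (by simp)]
      omega
    · have hne' : l ≠ [] := by rintro rfl; simp at hne
      rw [List.head_map, List.getLast_map]
      rw [List.head_append_left hne'] at hN
      rw [Finset.card_insert_of_notMem (ha _ (List.mem_append_left _ (List.head_mem hne'))),
        Finset.card_insert_of_notMem (ha _ (List.mem_append_left _ (List.getLast_mem hne')))]
      have : AddOne (l.getLast hne') z := by
        have := (List.isChain_append.1 hl).2.2 (l.getLast hne')
          (by rw [List.getLast?_eq_some_getLast hne']; rfl) z (by simp)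
        exact this
      obtain ⟨e, he, rfl⟩ := this
      rw [Finset.card_insert_of_notMem he] at hN
      omega

theorem scd_boolean {β : Type*} [DecidableEq β] (s : Finset β) :
    HasSCD {x | x ⊆ s} AddOne Finset.card s.card := by
  induction s using Finset.induction_on with
  | empty =>
    refine ⟨{[∅]}, by simp, by simp, ?_, by simp, by simp⟩
    intro x hx
    simp at hx
    subst hx
    exact ⟨[∅], by simp, by simp⟩
  | insert a s ha ih =>
    rw [Finset.card_insert_of_notMem ha]
    obtain ⟨C, h0, hS, hu, hc, hr⟩ := ih
    have : ∀ x : Finset β, ∃ l, x ∈ {x | x ⊆ insert a s} → l ∈ C ∧ x.erase a ∈ l := by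
      intro x
      by_cases hx : x ⊆ insert a s
      · obtain ⟨l, hl, -⟩ := hu (x.erase a) (by
          simp only [Set.mem_ofPred_eq]
          rwa [← Finset.subset_insert_iff])
        exact ⟨l, fun _ => hl⟩
      · exact ⟨[], fun h => absurd h hx⟩
    choose g hg using this
    apply HasSCD.union g
    rintro l ⟨x0, hx0, rfl⟩
    obtain ⟨hlC, -⟩ := hg x0 hx0
    set l := g x0 with hldef
    have hset : {x | x ∈ {x | x ⊆ insert a s} ∧ g x = l} = {x | x.erase a ∈ l} := by
      ext x
      constructor
      · rintro ⟨hx, h⟩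
        simp only [Set.mem_ofPred_eq]
        rw [← h]
        exact (hg x hx).2
      · intro hx
        have h1 := hS l hlC _ hx
        simp only [Set.mem_ofPred_eq] at h1
        have h2 : x ⊆ insert a s := by rwa [Finset.subset_insert_iff]
        refine ⟨h2, ?_⟩
        exact (hu _ h1).unique (hg x h2) ⟨hlC, hx⟩
    rw [hset]
    have hne : l ≠ [] := by
      intro h
      exact h0 (h ▸ hlC)
    have h1 := hr l hlC hne
    have h2 := hc l hlC
    have h3 := hS l hlC
    clear_value l
    obtain rfl | ⟨l', z, rfl⟩ := List.eq_nil_or_concat' l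
    · exact absurd rfl hne
    · apply scd_double a l' z s.card h2
      · intro x hx hax
        exact ha (h3 x hx hax)
      · simpa using h1

/-- Valid codes of noncrossing partitions of the open cone configuration. -/
structure Valid (m n : ℕ) (Y : Finset (ℕ × ℕ)) : Prop where
  bd : ∀ a b, (a, b) ∈ Y → a ≤ m ∧ b ≤ n
  z00 : (0, 0) ∉ Y
  z10 : (1, 0) ∉ Y
  z01 : (0, 1) ∉ Y
  left : ∀ a b, (a, b) ∈ Y → 1 ≤ a → 1 ≤ b → (a, 0) ∉ Y
  right : ∀ a b, (a, b) ∈ Y → 1 ≤ a → 1 ≤ b → (0, b) ∉ Y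
  lt1 : ∀ a b a' b', (a, b) ∈ Y → (a', b') ∈ Y → 1 ≤ a → 1 ≤ b → 1 ≤ a' → 1 ≤ b' → a < a' → b < b'
  lt2 : ∀ a b c d, (a, b) ∈ Y → (c, d) ∈ Y → 1 ≤ a → 1 ≤ b → 1 ≤ c → 1 ≤ d → b < d → a < c

/-- The core of a code: the matched pairs other than `(1,1)`. -/
def coreOf (Y : Finset (ℕ × ℕ)) : Finset (ℕ × ℕ) :=
  Y.filter fun p => 1 ≤ p.1 ∧ 1 ≤ p.2 ∧ p ≠ (1, 1)

/-- The elements which can be freely added to a core. -/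
def freeOf (m n : ℕ) (c : Finset (ℕ × ℕ)) : Finset (ℕ × ℕ) :=
  (((Finset.Icc 1 m \ c.image Prod.fst).erase 1).image fun j => (j, 0)) ∪
  (((Finset.Icc 1 n \ c.image Prod.snd).erase 1).image fun k => (0, k)) ∪
  (if 1 ∈ Finset.Icc 1 m \ c.image Prod.fst ∧ 1 ∈ Finset.Icc 1 n \ c.image Prod.snd
    then {(1, 1)} else ∅)

theorem mem_freeOf (m n : ℕ) (c : Finset (ℕ × ℕ)) (a b : ℕ) : (a, b) ∈ freeOf m n c ↔
    (b = 0 ∧ 2 ≤ a ∧ a ≤ m ∧ ∀ y, (a, y) ∉ c) ∨ (a = 0 ∧ 2 ≤ b ∧ b ≤ n ∧ ∀ x, (x, b) ∉ c) ∨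
    (a = 1 ∧ b = 1 ∧ 1 ≤ m ∧ 1 ≤ n ∧ (∀ y, (1, y) ∉ c) ∧ ∀ x, (x, 1) ∉ c) := by
  unfold freeOf
  simp only [mem_union, mem_image, mem_erase, mem_sdiff, mem_Icc, Prod.mk.injEq, Prod.exists,
    exists_and_right, exists_eq_right]
  constructor
  · rintro ((⟨j, ⟨h1, h2, h3⟩, rfl, rfl⟩ | ⟨j, ⟨h1, h2, h3⟩, rfl, rfl⟩) | h)
    · left
      exact ⟨rfl, by omega, by omega, fun y hy => h3 ⟨y, hy⟩⟩
    · right; left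
      exact ⟨rfl, by omega, by omega, fun y hy => h3 ⟨y, hy⟩⟩
    · right; right
      split_ifs at h with h'
      · simp only [mem_sdiff, mem_Icc, mem_image, Prod.exists, exists_and_right, exists_eq_right] at h'
        simp only [mem_singleton, Prod.mk.injEq] at h
        exact ⟨h.1, h.2, h'.1.1.2, h'.2.1.2, fun y hy => h'.1.2 ⟨y, hy⟩, fun y hy => h'.2.2 ⟨y, hy⟩⟩
      · simp at h
  · rintro (⟨rfl, h1, h2, h3⟩ | ⟨rfl, h1, h2, h3⟩ | ⟨rfl, rfl, h1, h2, h3, h4⟩)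
    · left; left
      exact ⟨a, ⟨by omega, ⟨by omega, h2⟩, fun ⟨y, hy⟩ => h3 y hy⟩, rfl, rfl⟩
    · left; right
      exact ⟨b, ⟨by omega, ⟨by omega, h2⟩, fun ⟨y, hy⟩ => h3 y hy⟩, rfl, rfl⟩
    · right
      rw [if_pos]
      · simp
      · simp only [mem_sdiff, mem_Icc, mem_image, Prod.exists, exists_and_right, exists_eq_right]
        exact ⟨⟨⟨le_refl _, h1⟩, fun ⟨y, hy⟩ => h3 y hy⟩, ⟨⟨le_refl _, h2⟩, fun ⟨y, hy⟩ => h4 y hy⟩⟩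

theorem mem_coreOf (Y : Finset (ℕ × ℕ)) (a b : ℕ) :
    (a, b) ∈ coreOf Y ↔ (a, b) ∈ Y ∧ 1 ≤ a ∧ 1 ≤ b ∧ ¬ (a = 1 ∧ b = 1) := by
  simp [coreOf]

theorem card_erase_one (s : Finset ℕ) : (s.erase 1).card + (if 1 ∈ s then 1 else 0) = s.card := by
  split_ifs with h
  · exact Finset.card_erase_add_one h
  · rw [Finset.erase_eq_of_notMem h, add_zero]

theorem card_freeOf (m n : ℕ) (Y : Finset (ℕ × ℕ)) (hY : Valid m n Y) :
    2 * (coreOf Y).card + (freeOf m n (coreOf Y)).card = m + n - 1 := by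
  set c := coreOf Y with hc
  have hmem : ∀ a b, (a, b) ∈ c → (a, b) ∈ Y ∧ 1 ≤ a ∧ 1 ≤ b ∧ ¬ (a = 1 ∧ b = 1) :=
    fun a b h => (mem_coreOf Y a b).1 h
  have hi1 : (c.image Prod.fst).card = c.card := by
    apply Finset.card_image_of_injOn
    rintro ⟨a, b⟩ h ⟨a', b'⟩ h' (rfl : a = a')
    obtain ⟨h1, h2, h3, -⟩ := hmem _ _ h
    obtain ⟨h1', h2', h3', -⟩ := hmem _ _ h'
    have := hY.lt2 _ _ _ _ h1 h1' h2 h3 h2' h3'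
    have := hY.lt2 _ _ _ _ h1' h1 h2' h3' h2 h3
    congr 1
    omega
  have hi2 : (c.image Prod.snd).card = c.card := by
    apply Finset.card_image_of_injOn
    rintro ⟨a, b⟩ h ⟨a', b'⟩ h' (rfl : b = b')
    obtain ⟨h1, h2, h3, -⟩ := hmem _ _ h
    obtain ⟨h1', h2', h3', -⟩ := hmem _ _ h'
    have := hY.lt1 _ _ _ _ h1 h1' h2 h3 h2' h3'
    have := hY.lt1 _ _ _ _ h1' h1 h2' h3' h2 h3
    congr 1
    omega
  have hs1 : c.image Prod.fst ⊆ Finset.Icc 1 m := by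
    intro a ha
    obtain ⟨⟨a, b⟩, h, rfl⟩ := Finset.mem_image.1 ha
    obtain ⟨h1, h2, h3, -⟩ := hmem _ _ h
    exact Finset.mem_Icc.2 ⟨h2, (hY.bd _ _ h1).1⟩
  have hs2 : c.image Prod.snd ⊆ Finset.Icc 1 n := by
    intro a ha
    obtain ⟨⟨a, b⟩, h, rfl⟩ := Finset.mem_image.1 ha
    obtain ⟨h1, h2, h3, -⟩ := hmem _ _ h
    exact Finset.mem_Icc.2 ⟨h3, (hY.bd _ _ h1).2⟩
  have hk1 := Finset.card_sdiff_add_card_eq_card hs1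
  have hk2 := Finset.card_sdiff_add_card_eq_card hs2
  have he1 := card_erase_one (Finset.Icc 1 m \ c.image Prod.fst)
  have he2 := card_erase_one (Finset.Icc 1 n \ c.image Prod.snd)
  have hnot : 1 ∈ c.image Prod.fst → 1 ∈ c.image Prod.snd → False := by
    intro h h'
    obtain ⟨⟨a, b⟩, h, h1⟩ := Finset.mem_image.1 h
    obtain ⟨⟨a', b'⟩, h', h2⟩ := Finset.mem_image.1 h'
    simp only at h1 h2
    subst h1 h2
    obtain ⟨h1, h2, h3, h4⟩ := hmem _ _ h
    obtain ⟨h1', h2', h3', h4'⟩ := hmem _ _ h'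
    have := hY.lt1 _ _ _ _ h1 h1' h2 h3 h2' h3'
    omega
  have hzero1 : m = 0 → c.card = 0 := by
    intro h; subst h; rw [← hi1]; have := Finset.card_le_card hs1; simpa using this
  have hzero2 : n = 0 → c.card = 0 := by
    intro h; subst h; rw [← hi2]; have := Finset.card_le_card hs2; simpa using this
  have hF : (freeOf m n c).card = ((Finset.Icc 1 m \ c.image Prod.fst).erase 1).card +
      ((Finset.Icc 1 n \ c.image Prod.snd).erase 1).card +
      (if 1 ∈ Finset.Icc 1 m \ c.image Prod.fst ∧ 1 ∈ Finset.Icc 1 n \ c.image Prod.snd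
        then 1 else 0) := by
    unfold freeOf
    rw [Finset.card_union_of_disjoint, Finset.card_union_of_disjoint, Finset.card_image_of_injective,
      Finset.card_image_of_injective]
    · congr 1
      split_ifs <;> rfl
    · intro a b h; simpa using h
    · intro a b h; simpa using h
    · rw [Finset.disjoint_left]
      rintro ⟨a, b⟩ h h'
      simp only [mem_image, mem_erase, mem_sdiff, mem_Icc, Prod.mk.injEq] at h h'
      obtain ⟨j, h1, rfl, rfl⟩ := h
      obtain ⟨k, h2, rfl, h3⟩ := h'
      omega
    · rw [Finset.disjoint_left]
      rintro ⟨a, b⟩ h h'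
      have : a = 1 ∧ b = 1 := by
        split_ifs at h'
        · simpa using h'
        · simp at h'
      obtain ⟨rfl, rfl⟩ := this
      simp at h
  rw [hF]
  have i1 : 1 ∈ Finset.Icc 1 m \ c.image Prod.fst ↔ 1 ≤ m ∧ 1 ∉ c.image Prod.fst := by
    rw [mem_sdiff, mem_Icc]; simp
  have i2 : 1 ∈ Finset.Icc 1 n \ c.image Prod.snd ↔ 1 ≤ n ∧ 1 ∉ c.image Prod.snd := by
    rw [mem_sdiff, mem_Icc]; simp
  rw [hi1, Nat.card_Icc] at hk1
  rw [hi2, Nat.card_Icc] at hk2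
  simp only [i1, i2] at he1 he2 ⊢
  have hle1 : 1 ∈ c.image Prod.fst → 1 ≤ m ∧ 0 < c.card := fun h =>
    ⟨(Finset.mem_Icc.1 (hs1 h)).2, hi1 ▸ Finset.card_pos.2 ⟨1, h⟩⟩
  have hle2 : 1 ∈ c.image Prod.snd → 1 ≤ n ∧ 0 < c.card := fun h =>
    ⟨(Finset.mem_Icc.1 (hs2 h)).2, hi2 ▸ Finset.card_pos.2 ⟨1, h⟩⟩
  clear_value c
  clear hF i1 i2 hs1 hs2 hi1 hi2 hmem hY
  by_cases p1 : 1 ∈ c.image Prod.fst <;> by_cases p2 : 1 ∈ c.image Prod.snd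
  · exact (hnot p1 p2).elim
  all_goals
    simp only [p1, p2, not_true_eq_false, not_false_eq_true, and_true, and_false, false_and, if_false,
      forall_const, false_imp_iff] at he1 he2 hle1 hle2 ⊢
    split_ifs at he1 he2 ⊢ <;> omega

theorem valid_union (m n : ℕ) (Y X : Finset (ℕ × ℕ)) (hY : Valid m n Y)
    (hX : X ⊆ freeOf m n (coreOf Y)) : Valid m n (coreOf Y ∪ X) := by
  have hc : ∀ a b, (a, b) ∈ coreOf Y → (a, b) ∈ Y ∧ 1 ≤ a ∧ 1 ≤ b ∧ ¬ (a = 1 ∧ b = 1) :=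
    fun a b h => (mem_coreOf Y a b).1 h
  have hx : ∀ a b, (a, b) ∈ X → _ := fun a b h => (mem_freeOf m n _ a b).1 (hX h)
  have hlt1 := hY.lt1
  have hlt2 := hY.lt2
  have hbd := hY.bd
  have key : ∀ a b, (a, b) ∈ coreOf Y ∪ X → 1 ≤ a → 1 ≤ b → (a, b) ∈ coreOf Y ∨
      (a = 1 ∧ b = 1 ∧ 1 ≤ m ∧ 1 ≤ n ∧ (∀ y, (1, y) ∉ coreOf Y) ∧ ∀ x, (x, 1) ∉ coreOf Y) := by
    intro a b h h1 h2
    rcases Finset.mem_union.1 h with h | h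
    · exact Or.inl h
    · rcases hx a b h with h | h | h
      · omega
      · omega
      · exact Or.inr h
  have ge2 : (∀ y, (1, y) ∉ coreOf Y) → (∀ x, (x, 1) ∉ coreOf Y) → ∀ a b, (a, b) ∈ coreOf Y →
      1 < a ∧ 1 < b := by
    intro h1 h2 a b h
    obtain ⟨-, h3, h4, -⟩ := hc a b h
    constructor
    · rcases Nat.lt_or_ge 1 a with h5 | h5
      · exact h5
      · have : a = 1 := by omega
        subst this
        exact absurd h (h1 b)
    · rcases Nat.lt_or_ge 1 b with h5 | h5
      · exact h5
      · have : b = 1 := by omega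
        subst this
        exact absurd h (h2 a)
  refine ⟨?_, ?_, ?_, ?_, ?_, ?_, ?_, ?_⟩
  · intro a b h
    rcases Finset.mem_union.1 h with h | h
    · exact hbd _ _ (hc a b h).1
    · have := hx a b h
      omega
  · intro h
    rcases Finset.mem_union.1 h with h | h
    · have := hc _ _ h; omega
    · have := hx _ _ h; omega
  · intro h
    rcases Finset.mem_union.1 h with h | h
    · have := hc _ _ h; omega
    · have := hx _ _ h; omega
  · intro h
    rcases Finset.mem_union.1 h with h | h
    · have := hc _ _ h; omega
    · have := hx _ _ h; omega
  · intro a b h h1 h2 h'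
    rcases Finset.mem_union.1 h' with h' | h'
    · have := hc _ _ h'; omega
    · rcases key a b h h1 h2 with h3 | h3
      · rcases hx _ _ h' with h4 | h4 | h4
        · exact h4.2.2.2 b h3
        · omega
        · omega
      · have := hx _ _ h'; omega
  · intro a b h h1 h2 h'
    rcases Finset.mem_union.1 h' with h' | h'
    · have := hc _ _ h'; omega
    · rcases key a b h h1 h2 with h3 | h3
      · rcases hx _ _ h' with h4 | h4 | h4
        · omega
        · exact h4.2.2.2 a h3
        · omega
      · have := hx _ _ h'; omega
  · intro a b a' b' h h' h1 h2 h3 h4 hlt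
    rcases key a b h h1 h2 with h5 | ⟨rfl, rfl, -, -, h5, h6⟩
    · rcases key a' b' h' h3 h4 with h6 | ⟨rfl, rfl, -⟩
      · exact hlt1 _ _ _ _ (hc _ _ h5).1 (hc _ _ h6).1 h1 h2 h3 h4 hlt
      · omega
    · rcases key a' b' h' h3 h4 with h7 | ⟨rfl, rfl, -⟩
      · exact (ge2 h5 h6 _ _ h7).2
      · omega
  · intro a b a' b' h h' h1 h2 h3 h4 hlt
    rcases key a b h h1 h2 with h5 | ⟨rfl, rfl, -, -, h5, h6⟩
    · rcases key a' b' h' h3 h4 with h6 | ⟨rfl, rfl, -⟩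
      · exact hlt2 _ _ _ _ (hc _ _ h5).1 (hc _ _ h6).1 h1 h2 h3 h4 hlt
      · omega
    · rcases key a' b' h' h3 h4 with h7 | ⟨rfl, rfl, -⟩
      · exact (ge2 h5 h6 _ _ h7).1
      · omega

theorem core_disjoint_free (m n : ℕ) (Y : Finset (ℕ × ℕ)) :
    Disjoint (coreOf Y) (freeOf m n (coreOf Y)) := by
  rw [Finset.disjoint_left]
  rintro ⟨a, b⟩ h h'
  have := (mem_coreOf _ _ _).1 h
  have := (mem_freeOf _ _ _ _ _).1 h'
  omega

theorem core_union (m n : ℕ) (Y X : Finset (ℕ × ℕ))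
    (hX : X ⊆ freeOf m n (coreOf Y)) : coreOf (coreOf Y ∪ X) = coreOf Y := by
  ext ⟨a, b⟩
  rw [mem_coreOf, Finset.mem_union]
  constructor
  · rintro ⟨h | h, h1, h2, h3⟩
    · exact h
    · have := (mem_freeOf _ _ _ _ _).1 (hX h)
      omega
  · intro h
    exact ⟨Or.inl h, ((mem_coreOf _ _ _).1 h).2⟩

theorem sdiff_core_subset (m n : ℕ) (Y : Finset (ℕ × ℕ)) (hY : Valid m n Y) :
    Y \ coreOf Y ⊆ freeOf m n (coreOf Y) := by
  rintro ⟨a, b⟩ h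
  rw [Finset.mem_sdiff, mem_coreOf] at h
  obtain ⟨h, h'⟩ := h
  have hb := hY.bd _ _ h
  rw [mem_freeOf]
  rcases Nat.eq_zero_or_pos a with rfl | ha
  · right; left
    have : b ≠ 0 := by rintro rfl; exact hY.z00 h
    have : b ≠ 1 := by rintro rfl; exact hY.z01 h
    refine ⟨rfl, by omega, hb.2, ?_⟩
    intro x hx
    have hx := (mem_coreOf _ _ _).1 hx
    exact hY.right _ _ hx.1 hx.2.1 hx.2.2.1 h
  · rcases Nat.eq_zero_or_pos b with rfl | hb'
    · left
      have : a ≠ 1 := by rintro rfl; exact hY.z10 h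
      refine ⟨rfl, by omega, hb.1, ?_⟩
      intro x hx
      have hx := (mem_coreOf _ _ _).1 hx
      exact hY.left _ _ hx.1 hx.2.1 hx.2.2.1 h
    · right; right
      have : a = 1 ∧ b = 1 := by tauto
      obtain ⟨rfl, rfl⟩ := this
      refine ⟨rfl, rfl, hb.1, hb.2, ?_, ?_⟩
      · intro y hy
        have hy := (mem_coreOf _ _ _).1 hy
        have := hY.lt2 _ _ _ _ h hy.1
        omega
      · intro y hy
        have hy := (mem_coreOf _ _ _).1 hy
        have := hY.lt1 _ _ _ _ h hy.1
        omega

theorem scd_valid (m n : ℕ) : HasSCD {Y | Valid m n Y} AddOne Finset.card (m + n - 1) := by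
  apply HasSCD.union coreOf
  rintro _ ⟨Y, hY, rfl⟩
  have hset : {x | x ∈ {Y | Valid m n Y} ∧ coreOf x = coreOf Y} =
      (fun X => coreOf Y ∪ X) '' {X | X ⊆ freeOf m n (coreOf Y)} := by
    ext Z
    constructor
    · rintro ⟨hZ, h⟩
      refine ⟨Z \ coreOf Y, ?_, ?_⟩
      · have := sdiff_core_subset m n Z hZ
        rwa [h] at this
      · have : coreOf Y ⊆ Z := by rw [← h]; exact Finset.filter_subset _ _
        exact Finset.union_sdiff_of_subset this
    · rintro ⟨X, hX, rfl⟩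
      exact ⟨valid_union m n Y X hY hX, core_union m n Y X hX⟩
  rw [hset]
  have hd : ∀ X ∈ {X | X ⊆ freeOf m n (coreOf Y)}, Disjoint (coreOf Y) X := by
    intro X hX
    exact Finset.disjoint_of_subset_right hX (core_disjoint_free m n Y)
  refine (scd_boolean (freeOf m n (coreOf Y))).map _ ?_ _ _ _ ?_ ?_
  · intro X hX X' hX' h
    have h : coreOf Y ∪ X = coreOf Y ∪ X' := h
    rw [← Finset.union_sdiff_cancel_left (hd X hX), h, Finset.union_sdiff_cancel_left (hd X' hX')]
  · rintro X hX _ hX' ⟨e, he, rfl⟩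
    refine ⟨e, ?_, ?_⟩
    · rw [Finset.mem_union]
      rintro (h | h)
      · exact (Finset.disjoint_left.1 (hd _ hX') h) (Finset.mem_insert_self _ _)
      · exact he h
    · exact Finset.union_insert _ _ _
  · intro X hX X' hX' h
    have h1 := card_freeOf m n Y hY
    have h2 := Finset.card_union_of_disjoint (hd X hX)
    have h3 := Finset.card_union_of_disjoint (hd X' hX')
    simp only [h2, h3]
    omega

/-- The labels of the points of the configuration. -/
def inV (m n : ℕ) : ℕ ⊕ ℕ → Prop
  | Sum.inl j => 1 ≤ j ∧ j ≤ m
  | Sum.inr k => 1 ≤ k ∧ k ≤ n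

/-- Combinatorial noncrossing equivalence relations. -/
structure Comb (m n : ℕ) (r : ℕ ⊕ ℕ → ℕ ⊕ ℕ → Prop) : Prop where
  supp : ∀ x y, r x y → inV m n x
  refl : ∀ x, inV m n x → r x x
  symm : ∀ x y, r x y → r y x
  trans : ∀ x y z, r x y → r y z → r x z
  convR : ∀ i j k, r (Sum.inl i) (Sum.inl k) → i ≤ j → j ≤ k → r (Sum.inl i) (Sum.inl j)
  convI : ∀ i j k, r (Sum.inr i) (Sum.inr k) → i ≤ j → j ≤ k → r (Sum.inr i) (Sum.inr j)
  cross : ∀ i j k l, r (Sum.inl i) (Sum.inr l) → r (Sum.inl j) (Sum.inr k) → i < j → k < l →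
    r (Sum.inl i) (Sum.inl j)

theorem Comb.suppL {m n : ℕ} {r} (h : Comb m n r) {i x} (hr : r (Sum.inl i) x) : 1 ≤ i ∧ i ≤ m :=
  h.supp _ _ hr

theorem Comb.suppR {m n : ℕ} {r} (h : Comb m n r) {i x} (hr : r (Sum.inr i) x) : 1 ≤ i ∧ i ≤ n :=
  h.supp _ _ hr

open Classical in
/-- The start of the run containing `j`. -/
noncomputable def rt (S : ℕ → Prop) : ℕ → ℕ
  | 0 => 0
  | j + 1 => if S (j + 1) then rt S j else j + 1

theorem rt_succ_pos (S : ℕ → Prop) (j : ℕ) (h : S (j + 1)) : rt S (j + 1) = rt S j := by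
  simp [rt, h]

theorem rt_succ_neg (S : ℕ → Prop) (j : ℕ) (h : ¬ S (j + 1)) : rt S (j + 1) = j + 1 := by
  simp [rt, h]

theorem rt_le (S : ℕ → Prop) (j : ℕ) : rt S j ≤ j := by
  induction j with
  | zero => simp [rt]
  | succ j ih =>
    by_cases h : S (j + 1)
    · rw [rt_succ_pos S j h]; omega
    · rw [rt_succ_neg S j h]

theorem rt_mono (S : ℕ → Prop) : Monotone (rt S) := by
  apply monotone_nat_of_le_succ
  intro j
  by_cases h : S (j + 1)
  · rw [rt_succ_pos S j h]
  · rw [rt_succ_neg S j h]; have := rt_le S j; omega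

theorem rt_not (S : ℕ → Prop) (h0 : ¬ S 0) (j : ℕ) : ¬ S (rt S j) := by
  induction j with
  | zero => simpa [rt] using h0
  | succ j ih =>
    by_cases h : S (j + 1)
    · rwa [rt_succ_pos S j h]
    · rwa [rt_succ_neg S j h]

theorem rt_pos (S : ℕ → Prop) (h1 : ¬ S 1) (j : ℕ) (hj : 1 ≤ j) : 1 ≤ rt S j := by
  have h := rt_mono S hj
  rwa [rt_succ_neg S 0 h1] at h

theorem rt_self (S : ℕ → Prop) (j : ℕ) (h : ¬ S j) : rt S j = j := by
  cases j with
  | zero => rfl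
  | succ j => exact rt_succ_neg S j h

/-- Start of real runs. -/
noncomputable abbrev rR (Y : Finset (ℕ × ℕ)) : ℕ → ℕ := rt (fun j => (j, 0) ∈ Y)
/-- Start of imaginary runs. -/
noncomputable abbrev rI (Y : Finset (ℕ × ℕ)) : ℕ → ℕ := rt (fun j => (0, j) ∈ Y)

/-- The relation described by a code. -/
def relY (m n : ℕ) (Y : Finset (ℕ × ℕ)) : ℕ ⊕ ℕ → ℕ ⊕ ℕ → Prop
  | Sum.inl i, Sum.inl j => (1 ≤ i ∧ i ≤ m) ∧ (1 ≤ j ∧ j ≤ m) ∧ rR Y i = rR Y j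
  | Sum.inl i, Sum.inr k => (1 ≤ i ∧ i ≤ m) ∧ (1 ≤ k ∧ k ≤ n) ∧ (rR Y i, rI Y k) ∈ Y
  | Sum.inr k, Sum.inl i => (1 ≤ i ∧ i ≤ m) ∧ (1 ≤ k ∧ k ≤ n) ∧ (rR Y i, rI Y k) ∈ Y
  | Sum.inr i, Sum.inr j => (1 ≤ i ∧ i ≤ n) ∧ (1 ≤ j ∧ j ≤ n) ∧ rI Y i = rI Y j

open Classical in
/-- The code of a relation. -/
noncomputable def codeOf (m n : ℕ) (r : ℕ ⊕ ℕ → ℕ ⊕ ℕ → Prop) : Finset (ℕ × ℕ) :=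
  (Finset.range (m + 1) ×ˢ Finset.range (n + 1)).filter fun p =>
    (p.2 = 0 ∧ r (Sum.inl (p.1 - 1)) (Sum.inl p.1)) ∨
    (p.1 = 0 ∧ r (Sum.inr (p.2 - 1)) (Sum.inr p.2)) ∨
    (r (Sum.inl p.1) (Sum.inr p.2) ∧ ¬ r (Sum.inl (p.1 - 1)) (Sum.inl p.1) ∧
      ¬ r (Sum.inr (p.2 - 1)) (Sum.inr p.2))

theorem mem_code_left {m n : ℕ} {r} (h : Comb m n r) (j : ℕ) :
    (j, 0) ∈ codeOf m n r ↔ r (Sum.inl (j - 1)) (Sum.inl j) := by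
  simp only [codeOf, mem_filter, mem_product, mem_range]
  constructor
  · rintro ⟨-, ⟨-, h1⟩ | ⟨-, h1⟩ | ⟨h1, -⟩⟩
    · exact h1
    · have := h.suppR h1; omega
    · have := h.suppR (h.symm _ _ h1); omega
  · intro h1
    have := h.suppL (h.symm _ _ h1)
    exact ⟨⟨by omega, by omega⟩, Or.inl ⟨by trivial, h1⟩⟩

theorem mem_code_right {m n : ℕ} {r} (h : Comb m n r) (j : ℕ) :
    (0, j) ∈ codeOf m n r ↔ r (Sum.inr (j - 1)) (Sum.inr j) := by
  simp only [codeOf, mem_filter, mem_product, mem_range]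
  constructor
  · rintro ⟨-, ⟨-, h1⟩ | ⟨-, h1⟩ | ⟨h1, -⟩⟩
    · have := h.suppL h1; omega
    · exact h1
    · have := h.suppL h1; omega
  · intro h1
    have := h.suppR (h.symm _ _ h1)
    exact ⟨⟨by omega, by omega⟩, Or.inr (Or.inl ⟨by trivial, h1⟩)⟩

theorem mem_code_mid {m n : ℕ} {r} (h : Comb m n r) (a b : ℕ) (ha : 1 ≤ a) (hb : 1 ≤ b) :
    (a, b) ∈ codeOf m n r ↔ r (Sum.inl a) (Sum.inr b) ∧ (a, 0) ∉ codeOf m n r ∧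
      (0, b) ∉ codeOf m n r := by
  rw [mem_code_left h, mem_code_right h]
  simp only [codeOf, mem_filter, mem_product, mem_range]
  constructor
  · rintro ⟨-, ⟨h0, h1⟩ | ⟨h0, h1⟩ | h1⟩
    · omega
    · omega
    · exact h1
  · intro h1
    have := h.suppL h1.1
    have := h.suppR (h.symm _ _ h1.1)
    exact ⟨⟨by omega, by omega⟩, Or.inr (Or.inr h1)⟩

theorem valid_code {m n : ℕ} {r} (h : Comb m n r) : Valid m n (codeOf m n r) := by
  have hL : ∀ a b, a < b → r (Sum.inl a) (Sum.inl b) → (b, 0) ∈ codeOf m n r := by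
    intro a b hab hr
    rw [mem_code_left h]
    have := h.convR a (b - 1) b hr (by omega) (by omega)
    exact h.trans _ _ _ (h.symm _ _ this) hr
  have hR : ∀ a b, a < b → r (Sum.inr a) (Sum.inr b) → (0, b) ∈ codeOf m n r := by
    intro a b hab hr
    rw [mem_code_right h]
    have := h.convI a (b - 1) b hr (by omega) (by omega)
    exact h.trans _ _ _ (h.symm _ _ this) hr
  refine ⟨?_, ?_, ?_, ?_, ?_, ?_, ?_, ?_⟩
  · intro a b hab
    simp only [codeOf, mem_filter, mem_product, mem_range] at hab
    omega
  · rw [mem_code_left h]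
    intro h1
    have := h.suppL h1
    omega
  · rw [mem_code_left h]
    intro h1
    have := h.suppL h1
    omega
  · rw [mem_code_right h]
    intro h1
    have := h.suppR h1
    omega
  · intro a b hab ha hb
    exact ((mem_code_mid h a b ha hb).1 hab).2.1
  · intro a b hab ha hb
    exact ((mem_code_mid h a b ha hb).1 hab).2.2
  · intro a b a' b' hab hab' ha hb ha' hb' hlt
    obtain ⟨h1, h2, h3⟩ := (mem_code_mid h a b ha hb).1 hab
    obtain ⟨h1', h2', h3'⟩ := (mem_code_mid h a' b' ha' hb').1 hab'
    by_contra hcon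
    apply h2'
    apply hL a a' hlt
    rcases Nat.lt_or_ge b' b with h4 | h4
    · exact h.cross _ _ _ _ h1 h1' hlt h4
    · have : b = b' := by omega
      subst this
      exact h.trans _ _ _ h1 (h.symm _ _ h1')
  · intro a b a' b' hab hab' ha hb ha' hb' hlt
    obtain ⟨h1, h2, h3⟩ := (mem_code_mid h a b ha hb).1 hab
    obtain ⟨h1', h2', h3'⟩ := (mem_code_mid h a' b' ha' hb').1 hab'
    by_contra hcon
    rcases Nat.lt_or_ge a' a with h4 | h4
    · exact h2 (hL a' a h4 (h.cross _ _ _ _ h1' h1 h4 hlt))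
    · have : a = a' := by omega
      subst this
      exact h3' (hR b b' hlt (h.trans _ _ _ (h.symm _ _ h1) h1'))

theorem rel_rR {m n : ℕ} {r} (h : Comb m n r) (Y : Finset (ℕ × ℕ)) (hs : Y ⊆ codeOf m n r)
    (j : ℕ) (h1 : 1 ≤ j) (h2 : j ≤ m) : r (Sum.inl (rR Y j)) (Sum.inl j) := by
  induction j with
  | zero => omega
  | succ j ih =>
    by_cases hj : (j + 1, 0) ∈ Y
    · have h3 := (mem_code_left h _).1 (hs hj)
      have h4 := h.suppL h3
      simp only [Nat.add_sub_cancel] at h3 h4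
      rw [rR, rt_succ_pos _ j hj]
      exact h.trans _ _ _ (ih h4.1 (by omega)) h3
    · rw [rR, rt_succ_neg _ j hj]
      exact h.refl _ ⟨h1, h2⟩

theorem rel_rI {m n : ℕ} {r} (h : Comb m n r) (Y : Finset (ℕ × ℕ)) (hs : Y ⊆ codeOf m n r)
    (j : ℕ) (h1 : 1 ≤ j) (h2 : j ≤ n) : r (Sum.inr (rI Y j)) (Sum.inr j) := by
  induction j with
  | zero => omega
  | succ j ih =>
    by_cases hj : (0, j + 1) ∈ Y
    · have h3 := (mem_code_right h _).1 (hs hj)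
      have h4 := h.suppR h3
      simp only [Nat.add_sub_cancel] at h3 h4
      rw [rI, rt_succ_pos _ j hj]
      exact h.trans _ _ _ (ih h4.1 (by omega)) h3
    · rw [rI, rt_succ_neg _ j hj]
      exact h.refl _ ⟨h1, h2⟩

theorem relY_imp {m n : ℕ} {r} (h : Comb m n r) (Y : Finset (ℕ × ℕ)) (hY : Valid m n Y)
    (hs : Y ⊆ codeOf m n r) (x y : ℕ ⊕ ℕ) (hxy : relY m n Y x y) : r x y := by
  have mid : ∀ i k, (1 ≤ i ∧ i ≤ m) ∧ (1 ≤ k ∧ k ≤ n) ∧ (rR Y i, rI Y k) ∈ Y →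
      r (Sum.inl i) (Sum.inr k) := by
    rintro i k ⟨⟨h1, h2⟩, ⟨h3, h4⟩, h5⟩
    have h6 := ((mem_code_mid h _ _ (rt_pos _ hY.z10 i h1) (rt_pos _ hY.z01 k h3)).1 (hs h5)).1
    exact h.trans _ _ _ (h.symm _ _ (rel_rR h Y hs i h1 h2))
      (h.trans _ _ _ h6 (rel_rI h Y hs k h3 h4))
  rcases x with i | k <;> rcases y with j | l
  · obtain ⟨⟨h1, h2⟩, ⟨h3, h4⟩, h5⟩ := hxy
    have h6 := rel_rR h Y hs i h1 h2
    rw [h5] at h6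
    exact h.trans _ _ _ (h.symm _ _ h6) (rel_rR h Y hs j h3 h4)
  · exact mid _ _ hxy
  · exact h.symm _ _ (mid _ _ hxy)
  · obtain ⟨⟨h1, h2⟩, ⟨h3, h4⟩, h5⟩ := hxy
    have h6 := rel_rI h Y hs k h1 h2
    rw [h5] at h6
    exact h.trans _ _ _ (h.symm _ _ h6) (rel_rI h Y hs l h3 h4)

theorem imp_relY {m n : ℕ} {r} (h : Comb m n r) (x y : ℕ ⊕ ℕ) (hxy : r x y) :
    relY m n (codeOf m n r) x y := by
  have hY := valid_code h
  set Y := codeOf m n r with hYdef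
  have hL : ∀ i j, r (Sum.inl i) (Sum.inl j) → rR Y i ≤ rR Y j := by
    intro i j hr
    have hi := h.suppL hr
    have hj := h.suppL (h.symm _ _ hr)
    by_contra hcon
    have hri := rel_rR h Y subset_rfl i hi.1 hi.2
    have hrj := rel_rR h Y subset_rfl j hj.1 hj.2
    have h1 : r (Sum.inl (rR Y j)) (Sum.inl (rR Y i)) :=
      h.trans _ _ _ hrj (h.trans _ _ _ (h.symm _ _ hr) (h.symm _ _ hri))
    have h2 := h.convR _ (rR Y i - 1) _ h1 (by omega) (by omega)
    have h3 : r (Sum.inl (rR Y i - 1)) (Sum.inl (rR Y i)) := h.trans _ _ _ (h.symm _ _ h2) h1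
    exact rt_not (fun j => (j, 0) ∈ Y) hY.z00 i ((mem_code_left h _).2 h3)
  have hR : ∀ i j, r (Sum.inr i) (Sum.inr j) → rI Y i ≤ rI Y j := by
    intro i j hr
    have hi := h.suppR hr
    have hj := h.suppR (h.symm _ _ hr)
    by_contra hcon
    have hri := rel_rI h Y subset_rfl i hi.1 hi.2
    have hrj := rel_rI h Y subset_rfl j hj.1 hj.2
    have h1 : r (Sum.inr (rI Y j)) (Sum.inr (rI Y i)) :=
      h.trans _ _ _ hrj (h.trans _ _ _ (h.symm _ _ hr) (h.symm _ _ hri))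
    have h2 := h.convI _ (rI Y i - 1) _ h1 (by omega) (by omega)
    have h3 : r (Sum.inr (rI Y i - 1)) (Sum.inr (rI Y i)) := h.trans _ _ _ (h.symm _ _ h2) h1
    exact rt_not (fun j => (0, j) ∈ Y) hY.z00 i ((mem_code_right h _).2 h3)
  have mid : ∀ i k, r (Sum.inl i) (Sum.inr k) →
      (1 ≤ i ∧ i ≤ m) ∧ (1 ≤ k ∧ k ≤ n) ∧ (rR Y i, rI Y k) ∈ Y := by
    intro i k hr
    have hi := h.suppL hr
    have hj := h.suppR (h.symm _ _ hr)
    refine ⟨hi, hj, ?_⟩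
    rw [hYdef, mem_code_mid h _ _ (rt_pos _ hY.z10 i hi.1) (rt_pos _ hY.z01 k hj.1)]
    refine ⟨?_, rt_not (fun j => (j, 0) ∈ Y) hY.z00 i, rt_not (fun j => (0, j) ∈ Y) hY.z00 k⟩
    exact h.trans _ _ _ (rel_rR h Y subset_rfl i hi.1 hi.2)
      (h.trans _ _ _ hr (h.symm _ _ (rel_rI h Y subset_rfl k hj.1 hj.2)))
  rcases x with i | k <;> rcases y with j | l
  · exact ⟨h.suppL hxy, h.suppL (h.symm _ _ hxy), le_antisymm (hL _ _ hxy) (hL _ _ (h.symm _ _ hxy))⟩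
  · exact mid _ _ hxy
  · exact mid _ _ (h.symm _ _ hxy)
  · exact ⟨h.suppR hxy, h.suppR (h.symm _ _ hxy), le_antisymm (hR _ _ hxy) (hR _ _ (h.symm _ _ hxy))⟩

theorem comb_relY {m n : ℕ} {Y : Finset (ℕ × ℕ)} (hY : Valid m n Y) : Comb m n (relY m n Y) := by
  have pR : ∀ i, 1 ≤ i → 1 ≤ rR Y i := fun i hi => rt_pos _ hY.z10 i hi
  have pI : ∀ i, 1 ≤ i → 1 ≤ rI Y i := fun i hi => rt_pos _ hY.z01 i hi
  have uL : ∀ i j k, 1 ≤ i → 1 ≤ j → 1 ≤ k → (rR Y i, rI Y k) ∈ Y → (rR Y j, rI Y k) ∈ Y →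
      rR Y i = rR Y j := by
    intro i j k hi hj hk h1 h2
    have h3 := hY.lt1 _ _ _ _ h1 h2 (pR i hi) (pI k hk) (pR j hj) (pI k hk)
    have h4 := hY.lt1 _ _ _ _ h2 h1 (pR j hj) (pI k hk) (pR i hi) (pI k hk)
    omega
  have uR : ∀ i j k, 1 ≤ i → 1 ≤ j → 1 ≤ k → (rR Y k, rI Y i) ∈ Y → (rR Y k, rI Y j) ∈ Y →
      rI Y i = rI Y j := by
    intro i j k hi hj hk h1 h2
    have h3 := hY.lt2 _ _ _ _ h1 h2 (pR k hk) (pI i hi) (pR k hk) (pI j hj)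
    have h4 := hY.lt2 _ _ _ _ h2 h1 (pR k hk) (pI j hj) (pR k hk) (pI i hi)
    omega
  refine ⟨?_, ?_, ?_, ?_, ?_, ?_, ?_⟩
  · rintro (i | i) (j | j) h
    · exact h.1
    · exact h.1
    · exact h.2.1
    · exact h.1
  · rintro (i | i) h
    · exact ⟨h, h, rfl⟩
    · exact ⟨h, h, rfl⟩
  · rintro (i | i) (j | j) h
    · exact ⟨h.2.1, h.1, h.2.2.symm⟩
    · exact h
    · exact h
    · exact ⟨h.2.1, h.1, h.2.2.symm⟩
  · rintro (i | i) (j | j) (k | k) h h'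
    · exact ⟨h.1, h'.2.1, h.2.2.trans h'.2.2⟩
    · exact ⟨h.1, h'.2.1, by rw [h.2.2]; exact h'.2.2⟩
    · exact ⟨h.1, h'.1, uL _ _ _ h.1.1 h'.1.1 h.2.1.1 h.2.2 h'.2.2⟩
    · exact ⟨h.1, h'.2.1, by rw [← h'.2.2]; exact h.2.2⟩
    · exact ⟨h'.2.1, h.2.1, by rw [← h'.2.2]; exact h.2.2⟩
    · exact ⟨h.2.1, h'.2.1, uR _ _ _ h.2.1.1 h'.2.1.1 h.1.1 h.2.2 h'.2.2⟩
    · exact ⟨h'.1, h.1, by rw [h.2.2]; exact h'.2.2⟩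
    · exact ⟨h.1, h'.2.1, h.2.2.trans h'.2.2⟩
  · rintro i j k ⟨h1, h2, h3⟩ hij hjk
    have h4 : rR Y i ≤ rR Y j := rt_mono _ hij
    have h5 : rR Y j ≤ rR Y k := rt_mono _ hjk
    exact ⟨h1, ⟨by omega, by omega⟩, by omega⟩
  · rintro i j k ⟨h1, h2, h3⟩ hij hjk
    have h4 : rI Y i ≤ rI Y j := rt_mono _ hij
    have h5 : rI Y j ≤ rI Y k := rt_mono _ hjk
    exact ⟨h1, ⟨by omega, by omega⟩, by omega⟩
  · rintro i j k l ⟨h1, h2, h3⟩ ⟨h1', h2', h3'⟩ hij hkl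
    refine ⟨h1, h1', ?_⟩
    have h4 : rR Y i ≤ rR Y j := rt_mono _ hij.le
    have h5 : rI Y k ≤ rI Y l := rt_mono _ hkl.le
    have h6 := hY.lt1 _ _ _ _ h3 h3' (pR _ h1.1) (pI _ h2.1) (pR _ h1'.1) (pI _ h2'.1)
    omega

theorem code_relY {m n : ℕ} {Y : Finset (ℕ × ℕ)} (hY : Valid m n Y) :
    codeOf m n (relY m n Y) = Y := by
  have hC := comb_relY hY
  have eL : ∀ a, (a, 0) ∈ codeOf m n (relY m n Y) ↔ (a, 0) ∈ Y := by
    intro a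
    rw [mem_code_left hC]
    constructor
    · rintro ⟨h1, h2, h3⟩
      by_contra hcon
      rw [rR, rt_self (fun j => (j, 0) ∈ Y) a hcon] at h3
      have := rt_le (fun j => (j, 0) ∈ Y) (a - 1)
      omega
    · intro h
      have h0 : a ≠ 0 := by rintro rfl; exact hY.z00 h
      have h1 : a ≠ 1 := by rintro rfl; exact hY.z10 h
      have hb := (hY.bd _ _ h).1
      refine ⟨by omega, by omega, ?_⟩
      obtain ⟨c, rfl⟩ : ∃ c, a = c + 1 := ⟨a - 1, by omega⟩
      rw [rR, rt_succ_pos _ c h]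
      rfl
  have eR : ∀ a, (0, a) ∈ codeOf m n (relY m n Y) ↔ (0, a) ∈ Y := by
    intro a
    rw [mem_code_right hC]
    constructor
    · rintro ⟨h1, h2, h3⟩
      by_contra hcon
      rw [rI, rt_self (fun j => (0, j) ∈ Y) a hcon] at h3
      have := rt_le (fun j => (0, j) ∈ Y) (a - 1)
      omega
    · intro h
      have h0 : a ≠ 0 := by rintro rfl; exact hY.z00 h
      have h1 : a ≠ 1 := by rintro rfl; exact hY.z01 h
      have hb := (hY.bd _ _ h).2
      refine ⟨by omega, by omega, ?_⟩
      obtain ⟨c, rfl⟩ : ∃ c, a = c + 1 := ⟨a - 1, by omega⟩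
      rw [rI, rt_succ_pos _ c h]
      rfl
  ext ⟨a, b⟩
  rcases Nat.eq_zero_or_pos b with rfl | hb
  · exact eL a
  rcases Nat.eq_zero_or_pos a with rfl | ha
  · exact eR b
  rw [mem_code_mid hC a b ha hb, eL, eR]
  constructor
  · rintro ⟨⟨-, -, h⟩, h1, h2⟩
    rwa [rR, rI, rt_self (fun j => (j, 0) ∈ Y) a h1, rt_self (fun j => (0, j) ∈ Y) b h2] at h
  · intro h
    have h1 := hY.left _ _ h ha hb
    have h2 := hY.right _ _ h ha hb
    refine ⟨⟨⟨ha, (hY.bd _ _ h).1⟩, ⟨hb, (hY.bd _ _ h).2⟩, ?_⟩, h1, h2⟩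
    rwa [rR, rI, rt_self (fun j => (j, 0) ∈ Y) a h1, rt_self (fun j => (0, j) ∈ Y) b h2]

/-- The labels as a finset. -/
def labels (m n : ℕ) : Finset (ℕ ⊕ ℕ) := (Finset.Icc 1 m).disjSum (Finset.Icc 1 n)

theorem mem_labels {m n : ℕ} (x : ℕ ⊕ ℕ) : x ∈ labels m n ↔ inV m n x := by
  rcases x with i | i <;> simp [labels, inV]

theorem card_labels (m n : ℕ) : (labels m n).card = m + n := by simp [labels]

/-- The label that stops being a representative because of a code element. -/
def phi (p : ℕ × ℕ) : ℕ ⊕ ℕ := if p.2 = 0 then Sum.inl p.1 else Sum.inr p.2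

/-- Representatives of the classes. -/
def reps (m n : ℕ) (Y : Finset (ℕ × ℕ)) : Finset (ℕ ⊕ ℕ) := labels m n \ Y.image phi

theorem card_reps {m n : ℕ} {Y : Finset (ℕ × ℕ)} (hY : Valid m n Y) :
    (reps m n Y).card + Y.card = m + n := by
  have hinj : Set.InjOn phi (Y : Set (ℕ × ℕ)) := by
    rintro ⟨a, b⟩ h ⟨a', b'⟩ h' he
    simp only [phi] at he
    have h : (a, b) ∈ Y := h
    have h' : (a', b') ∈ Y := h'
    split_ifs at he with h1 h2 h2
    · simp only [Sum.inl.injEq] at he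
      subst h1 h2 he
      rfl
    · simp only [Sum.inr.injEq] at he
      subst he
      rcases Nat.eq_zero_or_pos a with rfl | ha <;> rcases Nat.eq_zero_or_pos a' with rfl | ha'
      · rfl
      · exact absurd h (hY.right _ _ h' ha' (by omega))
      · exact absurd h' (hY.right _ _ h ha (by omega))
      · have h3 := hY.lt1 _ _ _ _ h h' ha (by omega) ha' (by omega)
        have h4 := hY.lt1 _ _ _ _ h' h ha' (by omega) ha (by omega)
        congr 1
        omega
  have hsub : Y.image phi ⊆ labels m n := by
    intro x hx
    obtain ⟨⟨a, b⟩, h, rfl⟩ := Finset.mem_image.1 hx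
    rw [mem_labels]
    have hb := hY.bd _ _ h
    by_cases h0 : b = 0
    · subst h0
      have h0 : a ≠ 0 := by rintro rfl; exact hY.z00 h
      simp only [phi, if_true, inV]
      omega
    · simp only [phi, h0, if_false, inV]
      omega
  have h1 := Finset.card_sdiff_add_card_eq_card hsub
  rw [Finset.card_image_of_injOn hinj, card_labels] at h1
  exact h1

theorem mem_reps_left {m n : ℕ} {Y : Finset (ℕ × ℕ)} (a : ℕ) :
    Sum.inl a ∈ reps m n Y ↔ (1 ≤ a ∧ a ≤ m) ∧ (a, 0) ∉ Y := by
  rw [reps, Finset.mem_sdiff, mem_labels, Finset.mem_image]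
  refine and_congr Iff.rfl (not_congr ⟨?_, fun h => ⟨_, h, by simp [phi]⟩⟩)
  rintro ⟨⟨x, y⟩, h, he⟩
  simp only [phi] at he
  split_ifs at he with h0
  · simp only [Sum.inl.injEq] at he
    subst h0 he
    exact h

theorem mem_reps_right {m n : ℕ} {Y : Finset (ℕ × ℕ)} (b : ℕ) :
    Sum.inr b ∈ reps m n Y ↔ (1 ≤ b ∧ b ≤ n) ∧ ∀ a, (a, b) ∉ Y := by
  rw [reps, Finset.mem_sdiff, mem_labels, Finset.mem_image]
  constructor
  · rintro ⟨h1, h2⟩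
    refine ⟨h1, fun a h => h2 ⟨_, h, ?_⟩⟩
    have : b ≠ 0 := by have := h1.1; omega
    simp [phi, this]
  · rintro ⟨h1, h2⟩
    refine ⟨h1, ?_⟩
    rintro ⟨⟨x, y⟩, h, he⟩
    simp only [phi] at he
    split_ifs at he with h0
    simp only [Sum.inr.injEq] at he
    subst he
    exact h2 _ h

theorem exists_rep {m n : ℕ} {Y : Finset (ℕ × ℕ)} (hY : Valid m n Y) (x : ℕ ⊕ ℕ) (hx : inV m n x) :
    ∃ y ∈ reps m n Y, relY m n Y x y := by
  rcases x with i | k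
  · have hn := rt_not (fun j => (j, 0) ∈ Y) hY.z00 i
    have h1 : 1 ≤ rR Y i := rt_pos _ hY.z10 i hx.1
    have h2 : rR Y i ≤ i := rt_le _ _
    have hx' : 1 ≤ i ∧ i ≤ m := hx
    have h3 : 1 ≤ rR Y i ∧ rR Y i ≤ m := by omega
    refine ⟨Sum.inl (rR Y i), (mem_reps_left _).2 ⟨h3, hn⟩, hx, h3, ?_⟩
    exact (rt_self (fun j => (j, 0) ∈ Y) _ hn).symm
  · have hn := rt_not (fun j => (0, j) ∈ Y) hY.z00 k
    have h1 : 1 ≤ rI Y k := rt_pos _ hY.z01 k hx.1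
    have h2 : rI Y k ≤ k := rt_le _ _
    have hx' : 1 ≤ k ∧ k ≤ n := hx
    have h3 : 1 ≤ rI Y k ∧ rI Y k ≤ n := by omega
    by_cases hex : ∃ a, (a, rI Y k) ∈ Y
    · obtain ⟨a, ha⟩ := hex
      have ha0 : 1 ≤ a := by
        rcases Nat.eq_zero_or_pos a with rfl | h
        · exact absurd ha hn
        · exact h
      have ham := (hY.bd _ _ ha).1
      have hl := hY.left _ _ ha ha0 h1
      refine ⟨Sum.inl a, (mem_reps_left _).2 ⟨⟨ha0, ham⟩, hl⟩, ⟨ha0, ham⟩, hx, ?_⟩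
      have : rR Y a = a := rt_self (fun j => (j, 0) ∈ Y) _ hl
      rwa [this]
    · refine ⟨Sum.inr (rI Y k), (mem_reps_right _).2 ⟨h3, fun a h => hex ⟨a, h⟩⟩, hx, h3, ?_⟩
      exact (rt_self (fun j => (0, j) ∈ Y) _ hn).symm

theorem rep_unique {m n : ℕ} {Y : Finset (ℕ × ℕ)} (x y : ℕ ⊕ ℕ)
    (hx : x ∈ reps m n Y) (hy : y ∈ reps m n Y) (h : relY m n Y x y) : x = y := by
  have sL : ∀ a, Sum.inl a ∈ reps m n Y → rR Y a = a := fun a ha =>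
    rt_self (fun j => (j, 0) ∈ Y) _ ((mem_reps_left _).1 ha).2
  have sR : ∀ a, Sum.inr a ∈ reps m n Y → rI Y a = a := fun a ha =>
    rt_self (fun j => (0, j) ∈ Y) _ (((mem_reps_right _).1 ha).2 0)
  rcases x with i | i <;> rcases y with j | j
  · obtain ⟨-, -, h⟩ := h
    rw [sL _ hx, sL _ hy] at h
    rw [h]
  · obtain ⟨-, -, h⟩ := h
    rw [sL _ hx, sR _ hy] at h
    exact absurd h (((mem_reps_right _).1 hy).2 _)
  · obtain ⟨-, -, h⟩ := h
    rw [sL _ hy, sR _ hx] at h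
    exact absurd h (((mem_reps_right _).1 hx).2 _)
  · obtain ⟨-, -, h⟩ := h
    rw [sR _ hx, sR _ hy] at h
    rw [h]

/-- The point with a given label. -/
noncomputable def pt : ℕ ⊕ ℕ → ℂ
  | Sum.inl j => (j : ℂ)
  | Sum.inr k => (k : ℂ) * Complex.I

open Classical in
/-- The label of a point. -/
noncomputable def dec (z : ℂ) : ℕ ⊕ ℕ := if z.im = 0 then Sum.inl ⌊z.re⌋₊ else Sum.inr ⌊z.im⌋₊

theorem dec_pt {m n : ℕ} (x : ℕ ⊕ ℕ) (hx : inV m n x) : dec (pt x) = x := by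
  rcases x with j | k
  · simp [dec, pt]
  · have : k ≠ 0 := by have := hx.1; omega
    simp [dec, pt, this]

theorem pt_inj {m n : ℕ} {x y : ℕ ⊕ ℕ} (hx : inV m n x) (hy : inV m n y) (h : pt x = pt y) :
    x = y := by
  rw [← dec_pt x hx, h, dec_pt y hy]

theorem mem_U {m n : ℕ} (z : ℂ) : z ∈ Uconfig m n ↔ ∃ x, inV m n x ∧ pt x = z := by
  simp only [Uconfig, mem_union, mem_image, mem_Icc]
  constructor
  · rintro (⟨j, h, rfl⟩ | ⟨j, h, rfl⟩)
    · exact ⟨Sum.inl j, h, rfl⟩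
    · exact ⟨Sum.inr j, h, rfl⟩
  · rintro ⟨j | j, h, rfl⟩
    · exact Or.inl ⟨j, h, rfl⟩
    · exact Or.inr ⟨j, h, rfl⟩

theorem pt_mem_U {m n : ℕ} (x : ℕ ⊕ ℕ) (hx : inV m n x) : pt x ∈ Uconfig m n :=
  (mem_U _).2 ⟨x, hx, rfl⟩

/-- The relation on labels induced by a noncrossing partition. -/
def BRel {m n : ℕ} (π : NC (Uconfig m n)) (x y : ℕ ⊕ ℕ) : Prop :=
  inV m n x ∧ inV m n y ∧ ∃ B ∈ π.1.parts, pt x ∈ B ∧ pt y ∈ B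

theorem block_eq_of_meet {m n : ℕ} (π : NC (Uconfig m n)) {B B' : Finset ℂ} (hB : B ∈ π.1.parts)
    (hB' : B' ∈ π.1.parts) (z : ℂ) (h : z ∈ convexHull ℝ (B : Set ℂ))
    (h' : z ∈ convexHull ℝ (B' : Set ℂ)) : B = B' := by
  by_contra hne
  exact Set.disjoint_left.1 (π.2 hB hB' hne) h h'

theorem real_mem_segment (i j k : ℝ) (h1 : i ≤ j) (h2 : j ≤ k) (v : ℂ) :
    (j : ℂ) * v ∈ segment ℝ ((i : ℂ) * v) ((k : ℂ) * v) := by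
  have h : j ∈ segment ℝ i k := by
    rw [segment_eq_Icc (h1.trans h2)]
    exact ⟨h1, h2⟩
  obtain ⟨a, b, ha, hb, hab, rfl⟩ := h
  refine ⟨a, b, ha, hb, hab, ?_⟩
  simp only [smul_eq_mul, Complex.real_smul]
  push_cast
  ring

theorem cross_segment (i j k l : ℝ) (hi : 0 < i) (hk : 0 < k) (hij : i < j) (hkl : k < l) :
    ∃ z : ℂ, z ∈ segment ℝ (i : ℂ) ((l : ℂ) * Complex.I) ∧
      z ∈ segment ℝ (j : ℂ) ((k : ℂ) * Complex.I) := by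
  have hD : 0 < l * j - i * k := by nlinarith
  have hD' := hD.ne'
  set D := l * j - i * k with hDdef
  refine ⟨((1 - k * (j - i) / D : ℝ) : ℂ) * i + ((k * (j - i) / D : ℝ) : ℂ) * (l * Complex.I),
    ⟨1 - k * (j - i) / D, k * (j - i) / D, ?_, ?_, by ring, ?_⟩,
    ⟨1 - l * (j - i) / D, l * (j - i) / D, ?_, ?_, by ring, ?_⟩⟩
  · rw [sub_nonneg, div_le_one hD]
    nlinarith
  · apply div_nonneg _ hD.le
    nlinarith
  · simp [Complex.real_smul]
  · rw [sub_nonneg, div_le_one hD]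
    nlinarith
  · apply div_nonneg _ hD.le
    nlinarith
  · apply Complex.ext
    · simp [Complex.real_smul]
      field_simp
      rw [hDdef]
      ring
    · simp [Complex.real_smul]
      field_simp

theorem comb_Rel {m n : ℕ} (π : NC (Uconfig m n)) : Comb m n (BRel π) := by
  refine ⟨fun x y h => h.1, ?_, ?_, ?_, ?_, ?_, ?_⟩
  · intro x hx
    obtain ⟨B, hB, h⟩ := π.1.exists_mem (pt_mem_U x hx)
    exact ⟨hx, hx, B, hB, h, h⟩
  · rintro x y ⟨hx, hy, B, hB, h1, h2⟩
    exact ⟨hy, hx, B, hB, h2, h1⟩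
  · rintro x y z ⟨hx, hy, B, hB, h1, h2⟩ ⟨-, hz, B', hB', h3, h4⟩
    have := π.1.eq_of_mem_parts hB hB' h2 h3
    subst this
    exact ⟨hx, hz, B, hB, h1, h4⟩
  · rintro i j k ⟨hx, hy, B, hB, h1, h2⟩ hij hjk
    have hj : inV m n (Sum.inl j) := ⟨hx.1.trans hij, hjk.trans hy.2⟩
    refine ⟨hx, hj, B, hB, h1, ?_⟩
    obtain ⟨B', hB', h3⟩ := π.1.exists_mem (pt_mem_U _ hj)
    have hz := real_mem_segment i j k (by exact_mod_cast hij) (by exact_mod_cast hjk) 1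
    simp only [mul_one, Complex.ofReal_natCast] at hz
    have := block_eq_of_meet π hB hB' (pt (Sum.inl j))
      (segment_subset_convexHull (Finset.mem_coe.2 h1) (Finset.mem_coe.2 h2) hz)
      (subset_convexHull ℝ _ h3)
    rwa [this]
  · rintro i j k ⟨hx, hy, B, hB, h1, h2⟩ hij hjk
    have hj : inV m n (Sum.inr j) := ⟨hx.1.trans hij, hjk.trans hy.2⟩
    refine ⟨hx, hj, B, hB, h1, ?_⟩
    obtain ⟨B', hB', h3⟩ := π.1.exists_mem (pt_mem_U _ hj)
    have hz := real_mem_segment i j k (by exact_mod_cast hij) (by exact_mod_cast hjk) Complex.I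
    simp only [Complex.ofReal_natCast] at hz
    have := block_eq_of_meet π hB hB' (pt (Sum.inr j))
      (segment_subset_convexHull (Finset.mem_coe.2 h1) (Finset.mem_coe.2 h2) hz)
      (subset_convexHull ℝ _ h3)
    rwa [this]
  · rintro i j k l ⟨hi, hl, B, hB, h1, h2⟩ ⟨hj, hk, B', hB', h3, h4⟩ hij hkl
    have hi0 : 0 < i := hi.1
    have hk0 : 0 < k := hk.1
    obtain ⟨z, hz1, hz2⟩ := cross_segment i j k l (by exact_mod_cast hi0) (by exact_mod_cast hk0)
      (by exact_mod_cast hij) (by exact_mod_cast hkl)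
    simp only [Complex.ofReal_natCast] at hz1 hz2
    have := block_eq_of_meet π hB hB' z
      (segment_subset_convexHull (Finset.mem_coe.2 h1) (Finset.mem_coe.2 h2) hz1)
      (segment_subset_convexHull (Finset.mem_coe.2 h3) (Finset.mem_coe.2 h4) hz2)
    subst this
    exact ⟨hi, hj, B, hB, h1, h3⟩

theorem le_of_Rel {m n : ℕ} (π σ : NC (Uconfig m n)) (h : ∀ x y, BRel π x y → BRel σ x y) : π ≤ σ := by
  intro B hB
  obtain ⟨z, hz⟩ := π.1.nonempty_of_mem_parts hB
  obtain ⟨x, hx, rfl⟩ := (mem_U z).1 (π.1.subset hB hz)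
  obtain ⟨B', hB', h'⟩ := σ.1.exists_mem (pt_mem_U x hx)
  refine ⟨B', hB', ?_⟩
  intro w hw
  obtain ⟨y, hy, rfl⟩ := (mem_U w).1 (π.1.subset hB hw)
  obtain ⟨-, -, B'', hB'', h1, h2⟩ := h x y ⟨hx, hy, B, hB, hz, hw⟩
  rwa [σ.1.eq_of_mem_parts hB' hB'' h' h1]

theorem separate (B B' : Set ℂ) (b d : ℕ)
    (h : ∀ z ∈ B, ∃ x, z = pt x ∧ (∀ j, x = Sum.inl j → j ≤ b) ∧ ∀ k, x = Sum.inr k → k ≤ d)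
    (h' : ∀ z ∈ B', ∃ x, z = pt x ∧ (∀ j, x = Sum.inl j → b < j) ∧ ∀ k, x = Sum.inr k → d < k) :
    Disjoint (convexHull ℝ B) (convexHull ℝ B') := by
  have hf : IsLinearMap ℝ (fun z : ℂ => z.re / (b + 1 / 2) + z.im / (d + 1 / 2)) := by
    constructor
    · intro x y
      simp only [Complex.add_re, Complex.add_im]
      ring
    · intro c x
      simp only [Complex.smul_re, Complex.smul_im, smul_eq_mul]
      ring
  have hb : (0 : ℝ) < b + 1 / 2 := by positivity
  have hd : (0 : ℝ) < d + 1 / 2 := by positivity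
  have h1 : convexHull ℝ B ⊆ {z : ℂ | z.re / (b + 1 / 2) + z.im / (d + 1 / 2) < 1} := by
    apply convexHull_min _ (convex_halfSpace_lt hf 1)
    intro z hz
    obtain ⟨x, rfl, hL, hR⟩ := h z hz
    rcases x with j | k
    · have : (j : ℝ) ≤ b := by exact_mod_cast hL j rfl
      simp only [pt, Set.mem_ofPred_eq, Complex.natCast_re, Complex.natCast_im, zero_div, add_zero]
      rw [div_lt_one hb]
      linarith
    · have : (k : ℝ) ≤ d := by exact_mod_cast hR k rfl
      simp [pt]
      rw [div_lt_one (by positivity)]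
      norm_num at hd ⊢
      linarith
  have h2 : convexHull ℝ B' ⊆ {z : ℂ | 1 < z.re / (b + 1 / 2) + z.im / (d + 1 / 2)} := by
    apply convexHull_min _ (convex_halfSpace_gt hf 1)
    intro z hz
    obtain ⟨x, rfl, hL, hR⟩ := h' z hz
    rcases x with j | k
    · have : (b : ℝ) + 1 ≤ j := by exact_mod_cast hL j rfl
      simp only [pt, Set.mem_ofPred_eq, Complex.natCast_re, Complex.natCast_im, zero_div, add_zero]
      rw [one_lt_div hb]
      linarith
    · have : (d : ℝ) + 1 ≤ k := by exact_mod_cast hR k rfl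
      simp [pt]
      rw [one_lt_div (by positivity)]
      norm_num
      linarith
  rw [Set.disjoint_left]
  intro z hz hz'
  have := h1 hz
  have := h2 hz'
  simp only [Set.mem_ofPred_eq] at *
  linarith

/-- Class `x` lies inside class `y`. -/
def Below (r : ℕ ⊕ ℕ → ℕ ⊕ ℕ → Prop) (x y : ℕ ⊕ ℕ) : Prop :=
  (∀ i j, r x (Sum.inl i) → r y (Sum.inl j) → i < j) ∧
  (∀ i j, r x (Sum.inr i) → r y (Sum.inr j) → i < j)

theorem below_or {m n : ℕ} {r} (h : Comb m n r) (x y : ℕ ⊕ ℕ) (hxy : ¬ r x y) :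
    Below r x y ∨ Below r y x := by
  have hne : ∀ u, r x u → r y u → False := fun u h1 h2 => hxy (h.trans _ _ _ h1 (h.symm _ _ h2))
  have hne2 : ∀ u v, r x u → r y v → r u v → False := fun u v h1 h2 h3 =>
    hne v (h.trans _ _ _ h1 h3) h2
  have con : ∀ u v w, r w u → r w v → r u v := fun u v w h1 h2 => h.trans _ _ _ (h.symm _ _ h1) h2
  by_contra hcon
  rw [not_or] at hcon
  obtain ⟨h1, h2⟩ := hcon
  simp only [Below, not_and_or, not_forall, not_lt] at h1 h2
  rcases h1 with ⟨i, j, hi, hj, hle⟩ | ⟨i, j, hi, hj, hle⟩ <;>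
    rcases h2 with ⟨j', i', hj', hi', hle'⟩ | ⟨j', i', hj', hi', hle'⟩
  · rcases le_total i' j with h3 | h3
    · exact hne2 _ _ hi' hj (h.convR i' j i (con _ _ _ hi' hi) h3 hle)
    · exact hne2 _ _ hi' hj (h.symm _ _ (h.convR j i' j' (con _ _ _ hj hj') h3 hle'))
  · rcases hle.eq_or_lt with rfl | hlt
    · exact hne _ hi hj
    rcases hle'.eq_or_lt with rfl | hlt'
    · exact hne _ hi' hj'
    exact hne2 _ _ hi hj (h.symm _ _ (h.cross j i i' j' (con _ _ _ hj hj') (con _ _ _ hi hi') hlt hlt'))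
  · rcases hle.eq_or_lt with rfl | hlt
    · exact hne _ hi hj
    rcases hle'.eq_or_lt with rfl | hlt'
    · exact hne _ hi' hj'
    exact hne2 _ _ hi' hj' (h.cross i' j' j i (con _ _ _ hi' hi) (con _ _ _ hj' hj) hlt' hlt)
  · rcases le_total i' j with h3 | h3
    · exact hne2 _ _ hi' hj (h.convI i' j i (con _ _ _ hi' hi) h3 hle)
    · exact hne2 _ _ hi' hj (h.symm _ _ (h.convI j i' j' (con _ _ _ hj hj') h3 hle'))

theorem exists_threshold (p q : ℕ → Prop) (N : ℕ) (hp : ∀ i, p i → i ≤ N) (hq : ∀ i, q i → 1 ≤ i)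
    (h : ∀ i j, p i → q j → i < j) : ∃ b, (∀ i, p i → i ≤ b) ∧ ∀ j, q j → b < j := by
  classical
  by_cases hex : ∃ i, p i
  · obtain ⟨i0, hi0⟩ := hex
    refine ⟨Nat.findGreatest p N, fun i hi => Nat.le_findGreatest (hp i hi) hi, fun j hj => ?_⟩
    exact h _ _ (Nat.findGreatest_spec (hp i0 hi0) hi0) hj
  · exact ⟨0, fun i hi => absurd ⟨i, hi⟩ hex, fun j hj => hq j hj⟩

theorem disjoint_of_below {m n : ℕ} {r} (h : Comb m n r) (x y : ℕ ⊕ ℕ) (hb : Below r x y)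
    (B B' : Set ℂ) (hB : ∀ z ∈ B, ∃ u, z = pt u ∧ r x u) (hB' : ∀ z ∈ B', ∃ u, z = pt u ∧ r y u) :
    Disjoint (convexHull ℝ B) (convexHull ℝ B') := by
  obtain ⟨b, hb1, hb2⟩ := exists_threshold (fun i => r x (Sum.inl i)) (fun i => r y (Sum.inl i)) m
    (fun i hi => (h.suppL (h.symm _ _ hi)).2) (fun i hi => (h.suppL (h.symm _ _ hi)).1) hb.1
  obtain ⟨d, hd1, hd2⟩ := exists_threshold (fun i => r x (Sum.inr i)) (fun i => r y (Sum.inr i)) n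
    (fun i hi => (h.suppR (h.symm _ _ hi)).2) (fun i hi => (h.suppR (h.symm _ _ hi)).1) hb.2
  apply separate B B' b d
  · intro z hz
    obtain ⟨u, rfl, hu⟩ := hB z hz
    exact ⟨u, rfl, fun j hj => hb1 j (hj ▸ hu), fun j hj => hd1 j (hj ▸ hu)⟩
  · intro z hz
    obtain ⟨u, rfl, hu⟩ := hB' z hz
    exact ⟨u, rfl, fun j hj => hb2 j (hj ▸ hu), fun j hj => hd2 j (hj ▸ hu)⟩

theorem exists_NC {m n : ℕ} {r} (h : Comb m n r) :
    ∃ π : NC (Uconfig m n), ∀ x y, BRel π x y ↔ r x y := by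
  classical
  let s : Setoid ℂ :=
    { r := fun a b => dec a = dec b ∨ r (dec a) (dec b)
      iseqv := by
        refine ⟨fun x => Or.inl rfl, ?_, ?_⟩
        · rintro x y (h1 | h1)
          · exact Or.inl h1.symm
          · exact Or.inr (h.symm _ _ h1)
        · rintro x y z (h1 | h1) (h2 | h2)
          · exact Or.inl (h1.trans h2)
          · exact Or.inr (h1 ▸ h2)
          · exact Or.inr (h2 ▸ h1)
          · exact Or.inr (h.trans _ _ _ h1 h2) }
  let P : Finpartition (Uconfig m n) := Finpartition.ofSetSetoid s (Uconfig m n)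
  have hs : ∀ x y, inV m n x → inV m n y → (s.r (pt x) (pt y) ↔ r x y) := by
    intro x y hx hy
    change (dec (pt x) = dec (pt y) ∨ r (dec (pt x)) (dec (pt y))) ↔ _
    rw [dec_pt x hx, dec_pt y hy]
    constructor
    · rintro (rfl | h1)
      · exact h.refl _ hx
      · exact h1
    · exact Or.inr
  have hparts : ∀ B, B ∈ P.parts ↔ ∃ x, inV m n x ∧ ∀ z, z ∈ B ↔ ∃ u, z = pt u ∧ r x u := by
    intro B
    change B ∈ (Uconfig m n).image (fun a => {b ∈ Uconfig m n | s.r a b}) ↔ _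
    rw [Finset.mem_image]
    have key : ∀ x, inV m n x → ∀ z, z ∈ {b ∈ Uconfig m n | s.r (pt x) b} ↔ ∃ u, z = pt u ∧ r x u := by
      intro x hx z
      rw [Finset.mem_filter, mem_U]
      constructor
      · rintro ⟨⟨u, hu, rfl⟩, h2⟩
        exact ⟨u, rfl, (hs x u hx hu).1 h2⟩
      · rintro ⟨u, rfl, hu⟩
        have huV := h.supp _ _ (h.symm _ _ hu)
        exact ⟨⟨u, huV, rfl⟩, (hs x u hx huV).2 hu⟩
    constructor
    · rintro ⟨a, ha, rfl⟩
      obtain ⟨x, hx, rfl⟩ := (mem_U a).1 ha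
      exact ⟨x, hx, key x hx⟩
    · rintro ⟨x, hx, hB⟩
      refine ⟨pt x, pt_mem_U x hx, ?_⟩
      ext z
      rw [hB, key x hx]
  have hNC : IsNoncrossing P := by
    intro B hB B' hB' hne
    obtain ⟨x, hx, hxB⟩ := (hparts B).1 hB
    obtain ⟨y, hy, hyB⟩ := (hparts B').1 hB'
    have hxy : ¬ r x y := by
      intro hr
      apply hne
      ext z
      rw [hxB, hyB]
      constructor
      · rintro ⟨u, hz, hu⟩
        exact ⟨u, hz, h.trans _ _ _ (h.symm _ _ hr) hu⟩
      · rintro ⟨u, hz, hu⟩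
        exact ⟨u, hz, h.trans _ _ _ hr hu⟩
    rcases below_or h x y hxy with hb | hb
    · exact disjoint_of_below h x y hb _ _ (fun z hz => (hxB z).1 hz) (fun z hz => (hyB z).1 hz)
    · exact (disjoint_of_below h y x hb _ _ (fun z hz => (hyB z).1 hz)
        (fun z hz => (hxB z).1 hz)).symm
  refine ⟨⟨P, hNC⟩, ?_⟩
  intro x y
  constructor
  · rintro ⟨hx, hy, B, hB, h1, h2⟩
    obtain ⟨w, hw, hB⟩ := (hparts B).1 hB
    obtain ⟨u, hu, hwu⟩ := (hB _).1 h1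
    obtain ⟨v, hv, hwv⟩ := (hB _).1 h2
    have := pt_inj hx (h.supp _ _ (h.symm _ _ hwu)) hu
    subst this
    have := pt_inj hy (h.supp _ _ (h.symm _ _ hwv)) hv
    subst this
    exact h.trans _ _ _ (h.symm _ _ hwu) hwv
  · intro hr
    have hx := h.supp _ _ hr
    have hy := h.supp _ _ (h.symm _ _ hr)
    obtain ⟨B, hB, hxB⟩ := P.exists_mem (pt_mem_U x hx)
    refine ⟨hx, hy, B, hB, hxB, ?_⟩
    obtain ⟨w, hw, hB⟩ := (hparts B).1 hB
    obtain ⟨u, hu, hwu⟩ := (hB _).1 hxB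
    have := pt_inj hx (h.supp _ _ (h.symm _ _ hwu)) hu
    subst this
    exact (hB _).2 ⟨y, rfl, h.trans _ _ _ hwu hr⟩

/-- The code of a noncrossing partition. -/
noncomputable def code {m n : ℕ} (π : NC (Uconfig m n)) : Finset (ℕ × ℕ) := codeOf m n (BRel π)

theorem code_valid {m n : ℕ} (π : NC (Uconfig m n)) : Valid m n (code π) := valid_code (comb_Rel π)

theorem BRel_iff {m n : ℕ} (π : NC (Uconfig m n)) (x y : ℕ ⊕ ℕ) : BRel π x y ↔ relY m n (code π) x y :=
  ⟨imp_relY (comb_Rel π) x y, relY_imp (comb_Rel π) _ (code_valid π) subset_rfl x y⟩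

theorem le_of_code {m n : ℕ} (π σ : NC (Uconfig m n)) (h : code π ⊆ code σ) : π ≤ σ := by
  apply le_of_Rel
  intro x y hxy
  exact relY_imp (comb_Rel σ) (code π) (code_valid π) h x y ((BRel_iff π x y).1 hxy)

theorem code_inj {m n : ℕ} {π σ : NC (Uconfig m n)} (h : code π = code σ) : π = σ :=
  le_antisymm (le_of_code _ _ h.le) (le_of_code _ _ h.ge)

theorem code_surj {m n : ℕ} (Y : Finset (ℕ × ℕ)) (hY : Valid m n Y) :
    ∃ π : NC (Uconfig m n), code π = Y := by
  obtain ⟨π, hπ⟩ := exists_NC (comb_relY hY)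
  refine ⟨π, ?_⟩
  have : BRel π = relY m n Y := by
    funext x y
    exact propext (hπ x y)
  rw [code, this, code_relY hY]

theorem card_parts_add {m n : ℕ} (π : NC (Uconfig m n)) :
    π.parts.card + (code π).card = m + n := by
  classical
  rw [← card_reps (code_valid π)]
  congr 1
  symm
  have hV : ∀ x ∈ reps m n (code π), inV m n x := by
    intro x hx
    rw [← mem_labels]
    exact (Finset.mem_sdiff.1 hx).1
  apply Finset.card_bij (fun x _ => π.1.part (pt x))
  · intro x hx
    exact π.1.part_mem.2 (pt_mem_U x (hV x hx))
  · intro x hx y hy he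
    apply rep_unique (m := m) (n := n) (Y := code π) x y hx hy
    rw [← BRel_iff]
    refine ⟨hV x hx, hV y hy, π.1.part (pt x), π.1.part_mem.2 (pt_mem_U x (hV x hx)),
      π.1.mem_part_self.2 (pt_mem_U x (hV x hx)), ?_⟩
    rw [he]
    exact π.1.mem_part_self.2 (pt_mem_U y (hV y hy))
  · intro B hB
    have hB : B ∈ π.1.parts := hB
    obtain ⟨z, hz⟩ := π.1.nonempty_of_mem_parts hB
    obtain ⟨x, hx, rfl⟩ := (mem_U z).1 (π.1.subset hB hz)
    obtain ⟨y, hy, hr⟩ := exists_rep (code_valid π) x hx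
    rw [← BRel_iff] at hr
    obtain ⟨-, -, B', hB', h1, h2⟩ := hr
    have := π.1.eq_of_mem_parts hB hB' hz h1
    subst this
    exact ⟨y, hy, π.1.part_eq_of_mem hB h2⟩

theorem eq_of_le_of_card {s : Finset ℂ} {P Q : Finpartition s} (h : P ≤ Q)
    (hc : P.parts.card ≤ Q.parts.card) : P = Q := by
  classical
  apply le_antisymm h
  have h1 : ∀ b ∈ Q.parts, ∃ c ∈ P.parts, c ≤ b := fun b => Finpartition.exists_le_of_le h
  choose! f hP hf using h1
  have hinj : Set.InjOn f (Q.parts : Set (Finset ℂ)) := by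
    intro b hb c hc he
    obtain ⟨z, hz⟩ := P.nonempty_of_mem_parts (hP b hb)
    exact Q.eq_of_mem_parts hb hc (hf b hb hz) (hf c hc (he ▸ hz))
  have himg : Q.parts.image f = P.parts := by
    apply Finset.eq_of_subset_of_card_le
    · intro x hx
      obtain ⟨b, hb, rfl⟩ := Finset.mem_image.1 hx
      exact hP b hb
    · rw [Finset.card_image_of_injOn hinj]
      exact hc
  intro q hq
  refine ⟨f q, hP q hq, ?_⟩
  intro x hx
  obtain ⟨p', hp', hxp'⟩ := P.exists_mem (Q.subset hq hx)
  rw [← himg] at hp'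
  obtain ⟨q', hq', rfl⟩ := Finset.mem_image.1 hp'
  rwa [Q.eq_of_mem_parts hq hq' hx (hf q' hq' hxp')]

theorem covBy_of_addOne {m n : ℕ} (π σ : NC (Uconfig m n)) (h : AddOne (code π) (code σ)) : π ⋖ σ := by
  have h1 := card_parts_add π
  have h2 := card_parts_add σ
  have hcard : (code σ).card = (code π).card + 1 := by
    obtain ⟨e, he, h⟩ := h
    rw [h, Finset.card_insert_of_notMem he]
  have hle : π ≤ σ := le_of_code _ _ h.ssubset.1
  have hne : π ≠ σ := by
    rintro rfl
    omega
  refine ⟨lt_of_le_of_ne hle hne, ?_⟩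
  intro τ h3 h4
  have h5 : π.1 ≤ τ.1 := h3.le
  have h6 : τ.1 ≤ σ.1 := h4.le
  have c1 : ¬ π.1.parts.card ≤ τ.1.parts.card := fun hc =>
    h3.ne (Subtype.ext (eq_of_le_of_card h5 hc))
  have c2 : ¬ τ.1.parts.card ≤ σ.1.parts.card := fun hc =>
    h4.ne (Subtype.ext (eq_of_le_of_card h6 hc))
  simp only [NC.parts] at h1 h2
  omega

/-- For all `m, n ≥ 0`, `NC(U_{m,n})` admits a symmetric chain decomposition: it can be
partitioned into saturated chains, each satisfying `ρ(min C) + ρ(max C) = (m + n) - 1`,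
where `ρ(π) = (m + n) - #blocks(π)`. -/
theorem nc_U_symmetric_chain_decomposition (m n : ℕ) :
    ∃ chains : Set (List (NC (Uconfig m n))),
      [] ∉ chains ∧
      (∀ x : NC (Uconfig m n), ∃! l, l ∈ chains ∧ x ∈ l) ∧
      (∀ l ∈ chains, List.Chain' (· ⋖ ·) l) ∧
      ∀ l ∈ chains, ∀ h : l ≠ [],
        ((m + n) - (l.head h).parts.card) +
            ((m + n) - (l.getLast h).parts.card) = (m + n) - 1 := by
  classical
  have hex : ∀ Y : Finset (ℕ × ℕ), ∃ π : NC (Uconfig m n), Valid m n Y → code π = Y := by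
    intro Y
    by_cases hY : Valid m n Y
    · obtain ⟨π, hπ⟩ := code_surj Y hY
      exact ⟨π, fun _ => hπ⟩
    · exact ⟨(code_surj ∅ ⟨by simp, by simp, by simp, by simp, by simp, by simp, by simp, by simp⟩).choose, fun h => absurd h hY⟩
  choose f hf using hex
  have H := (scd_valid m n).map f
    (fun Y hY Z hZ h => by rw [← hf Y hY, h, hf Z hZ]) (· ⋖ ·)
    (fun π => (m + n) - π.parts.card) (m + n - 1)
    (fun Y hY Z hZ h => covBy_of_addOne _ _ (by rwa [hf Y hY, hf Z hZ]))
    (fun Y hY Z hZ h => by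
      have h1 := card_parts_add (f Y)
      have h2 := card_parts_add (f Z)
      rw [hf Y hY] at h1
      rw [hf Z hZ] at h2
      omega)
  obtain ⟨C, h0, -, hu, hc, hr⟩ := H
  refine ⟨C, h0, fun x => hu x ⟨code x, code_valid x, code_inj (hf _ (code_valid x))⟩, hc, hr⟩
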